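/- Let H be a real inner product space, ℓ > 0 and μ > 0 reals, and L_1,…,L_N : H → ℝ differentiable functions such that each L_n is ℓ-smooth, i.e., L_n(v) ≤ L_n(w) + ⟨∇L_n(w), v − w⟩ + (ℓ/2)‖v − w‖² for all v, w, and μ-strongly convex, i.e., L_n(v) ≥ L_n(w) + ⟨∇L_n(w), v − w⟩ + (μ/2)‖v − w‖² for all v, w. Let p_1,…,p_N ≥ 0 with Σ p_n = 1, let L = Σ p_n L_n, let ω* be a global minimizer of L, let L_n* = inf L_n, and let γ = L(ω*) − Σ p_n L_n* (which is ≥ 0). Let ω_1,…,ω_N ∈ H, let ω = Σ p_n ω_n, and let ḡ = Σ p_n ∇L_n(ω_n). Then for every step size η with 0 < η ≤ 1/(4ℓ): ‖ω − ω* − η·ḡ‖² ≤ (1 − μη)·‖ω − ω*‖² + 2·Σ_{n=1}^N p_n‖ω − ω_n‖² + 6ℓη²·γ. -/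

import Mathlib

open scoped RealInnerProductSpace

/-!
For a single loss `f`, expand `‖w - u - η • g z‖²`, where the gradient is taken at `z` rather than
at `w`. Strong convexity turns `⟪g z, z - u⟫` into the gap `f z - f u`, and Young's inequality
absorbs the drift term `⟪w - z, g z⟫`. By smoothness `‖g z‖²` is at most `2ℓ (f z - c)` for every
lower bound `c` of `f`, so the total coefficient of `f z` is `-2η (1 - 2ℓη) ≤ 0`, and `f z` may be
replaced by a lower bound in terms of `f w`. What is left of the values of `f` is a nonpositive
multiple of `f w - f u` and at most `6ℓη² (f u - c)`. On averaging the losses the former can be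
dropped, because the averaged loss at `u` is at most that at `w`, while Jensen's inequality for the
squared norm handles the averages of the gradients and of the points `z`.
-/

theorem norm_sub_sum_smul_pow_le {ι E : Type*} [SeminormedAddCommGroup E] [NormedSpace ℝ E]
    {s : Finset ι} {p : ι → ℝ} (hp : ∀ i ∈ s, 0 ≤ p i) (hp1 : ∑ i ∈ s, p i = 1)
    (a : E) (x : ι → E) (k : ℕ) :
    ‖a - ∑ i ∈ s, p i • x i‖ ^ k ≤ ∑ i ∈ s, p i * ‖a - x i‖ ^ k := by
  have hconv : ConvexOn ℝ Set.univ fun y : E => dist y a ^ k :=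
    (convexOn_univ_dist a).pow (fun _ _ => dist_nonneg) k
  simpa only [dist_eq_norm', smul_eq_mul] using
    hconv.map_sum_le hp hp1 fun i _ => Set.mem_univ (x i)

section LocalLoss

variable {H : Type*} [SeminormedAddCommGroup H] [InnerProductSpace ℝ H]
  {f : H → ℝ} {g : H → H} {ℓ μ η c : ℝ}

/-- `ℓ`-smoothness of a function `f` with gradient field `g`, encoded as the quadratic upper bound
of the descent lemma. -/
def SmoothWith (ℓ : ℝ) (f : H → ℝ) (g : H → H) : Prop :=
  ∀ v w, f v ≤ f w + ⟪g w, v - w⟫ + ℓ / 2 * ‖v - w‖ ^ 2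

/-- `μ`-strong convexity of a function `f` with gradient field `g`, encoded as a quadratic lower
bound at every point; `μ = 0` is convexity. -/
def StronglyConvexWith (μ : ℝ) (f : H → ℝ) (g : H → H) : Prop :=
  ∀ v w, f v ≥ f w + ⟪g w, v - w⟫ + μ / 2 * ‖v - w‖ ^ 2

theorem norm_sub_smul_sq (x y : H) (η : ℝ) :
    ‖x - η • y‖ ^ 2 = ‖x‖ ^ 2 - 2 * η * ⟪x, y⟫ + η ^ 2 * ‖y‖ ^ 2 := by
  rw [norm_sub_sq_real, real_inner_smul_right, norm_smul, mul_pow, Real.norm_eq_abs, sq_abs,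
    mul_assoc]

theorem two_mul_inner_le_norm_sq_add (x y : H) (η : ℝ) :
    2 * η * ⟪x, y⟫ ≤ ‖x‖ ^ 2 + η ^ 2 * ‖y‖ ^ 2 := by
  linarith [norm_sub_smul_sq x y η, sq_nonneg ‖x - η • y‖]

theorem SmoothWith.norm_gradient_sq_le (hf : SmoothWith ℓ f g) (hℓ : 0 < ℓ) (hc : ∀ v, c ≤ f v)
    (w : H) : ‖g w‖ ^ 2 ≤ 2 * ℓ * (f w - c) := by
  -- The quadratic upper bound at `w` is minimized by a gradient step of length `1 / ℓ`.
  have hstep : c ≤ f w - ‖g w‖ ^ 2 / (2 * ℓ) :=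
    calc c ≤ f (w - ℓ⁻¹ • g w) := hc _
      _ ≤ f w + ⟪g w, -(ℓ⁻¹ • g w)⟫ + ℓ / 2 * ‖-(ℓ⁻¹ • g w)‖ ^ 2 := by
        simpa only [sub_sub_cancel_left] using hf (w - ℓ⁻¹ • g w) w
      _ = f w - ‖g w‖ ^ 2 / (2 * ℓ) := by
        rw [inner_neg_right, real_inner_smul_right, real_inner_self_eq_norm_sq, norm_neg,
          norm_smul, mul_pow, Real.norm_eq_abs, sq_abs]
        field_simp
        ring
  have hdiv : ‖g w‖ ^ 2 / (2 * ℓ) ≤ f w - c := by linarith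
  rwa [div_le_iff₀' (by positivity)] at hdiv

namespace StronglyConvexWith

theorem norm_sub_smul_gradient_sq_le (hf : StronglyConvexWith μ f g) (hη : 0 ≤ η) (u w z : H) :
    ‖w - u - η • g z‖ ^ 2 ≤ ‖w - u‖ ^ 2 - μ * η * ‖u - z‖ ^ 2 + ‖w - z‖ ^ 2
      + 2 * η ^ 2 * ‖g z‖ ^ 2 - 2 * η * (f z - f u) := by
  have hsplit : ⟪w - u, g z⟫ = -⟪z - w, g z⟫ - ⟪g z, u - z⟫ := by
    rw [real_inner_comm (u - z), ← inner_neg_left, ← inner_sub_left]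
    congr 1
    abel
  have hdrift : 2 * η * ⟪z - w, g z⟫ ≤ ‖w - z‖ ^ 2 + η ^ 2 * ‖g z‖ ^ 2 :=
    norm_sub_rev w z ▸ two_mul_inner_le_norm_sq_add (z - w) (g z) η
  have hgap : 2 * η * ⟪g z, u - z⟫ ≤ 2 * η * (f u - f z - μ / 2 * ‖u - z‖ ^ 2) := by
    gcongr
    linarith [hf u z]
  rw [norm_sub_smul_sq, hsplit]
  linarith

theorem two_mul_sub_le (hf : StronglyConvexWith μ f g) (hμ : 0 ≤ μ) (hη : 0 ≤ η) (w z : H) :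
    2 * η * (f w - f z) ≤ ‖w - z‖ ^ 2 + η ^ 2 * ‖g w‖ ^ 2 := by
  have hsub : f w - f z ≤ ⟪w - z, g w⟫ := by
    have hquad : 0 ≤ μ / 2 * ‖z - w‖ ^ 2 := by positivity
    rw [← neg_sub z w, inner_neg_left, real_inner_comm]
    linarith [hf z w]
  calc 2 * η * (f w - f z) ≤ 2 * η * ⟪w - z, g w⟫ := by gcongr
    _ ≤ ‖w - z‖ ^ 2 + η ^ 2 * ‖g w‖ ^ 2 := two_mul_inner_le_norm_sq_add _ _ _

theorem norm_sub_smul_gradient_sq_le_of_smoothWith (hconv : StronglyConvexWith μ f g)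
    (hsmooth : SmoothWith ℓ f g) (hℓ : 0 < ℓ) (hμ : 0 ≤ μ) (hη : 0 ≤ η) (hℓη : 2 * ℓ * η ≤ 1)
    (hc : ∀ v, c ≤ f v) (u w z : H) :
    ‖w - u - η • g z‖ ^ 2 ≤ ‖w - u‖ ^ 2 - μ * η * ‖u - z‖ ^ 2 + 2 * ‖w - z‖ ^ 2
      + 6 * ℓ * η ^ 2 * (f u - c)
      - 2 * η * (1 - 2 * ℓ * η) * (1 - ℓ * η) * (f w - f u) := by
  have hstep : ‖w - u - η • g z‖ ^ 2 ≤ ‖w - u‖ ^ 2 - μ * η * ‖u - z‖ ^ 2 + ‖w - z‖ ^ 2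
      + 2 * η ^ 2 * (2 * ℓ * (f z - c)) - 2 * η * (f z - f u) := by
    grw [hconv.norm_sub_smul_gradient_sq_le hη u w z, hsmooth.norm_gradient_sq_le hℓ hc z]
  have hvalue : 2 * η * (f w - f z) ≤ ‖w - z‖ ^ 2 + η ^ 2 * (2 * ℓ * (f w - c)) := by
    grw [hconv.two_mul_sub_le hμ hη w z, hsmooth.norm_gradient_sq_le hℓ hc w]
  have hscaled := mul_le_mul_of_nonneg_left hvalue (sub_nonneg.2 hℓη)
  have hdrift : 0 ≤ 2 * ℓ * η * ‖w - z‖ ^ 2 := by positivity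
  have hgap : 0 ≤ 4 * ℓ ^ 2 * η ^ 3 * (f u - c) :=
    mul_nonneg (by positivity) (sub_nonneg.2 (hc u))
  linarith

end StronglyConvexWith

end LocalLoss

theorem one_step_descent_bound_general
    {H ι : Type*} [SeminormedAddCommGroup H] [InnerProductSpace ℝ H] [Fintype ι]
    {ℓ μ η : ℝ} (hℓ : 0 < ℓ) (hμ : 0 ≤ μ) (hη : 0 ≤ η) (hℓη : 2 * ℓ * η ≤ 1)
    {L : ι → H → ℝ} {gradL : ι → H → H}
    (_hdiff : ∀ n w, HasFDerivAt (L n) (innerSL ℝ (gradL n w)) w)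
    (hsmooth : ∀ n, SmoothWith ℓ (L n) (gradL n))
    (hsconv : ∀ n, StronglyConvexWith μ (L n) (gradL n))
    {p : ι → ℝ} (hp : ∀ n, 0 ≤ p n) (hp1 : ∑ n, p n = 1)
    {c : ι → ℝ} (hc : ∀ n w, c n ≤ L n w)
    {ωs : ι → H} {ω : H} (hω : ω = ∑ n, p n • ωs n)
    {u : H} (hu : ∑ n, p n * L n u ≤ ∑ n, p n * L n ω) :
    ‖ω - u - η • ∑ n, p n • gradL n (ωs n)‖ ^ 2
      ≤ (1 - μ * η) * ‖ω - u‖ ^ 2 + 2 * ∑ n, p n * ‖ω - ωs n‖ ^ 2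
        + 6 * ℓ * η ^ 2 * (∑ n, p n * L n u - ∑ n, p n * c n) := by
  set κ := 2 * η * (1 - 2 * ℓ * η) * (1 - ℓ * η)
  have hκ : 0 ≤ κ :=
    mul_nonneg (mul_nonneg (by positivity) (by linarith)) (by linarith [mul_nonneg hℓ.le hη])
  have hdist : ‖ω - u‖ ^ 2 ≤ ∑ n, p n * ‖u - ωs n‖ ^ 2 := by
    rw [norm_sub_rev, hω]
    exact norm_sub_sum_smul_pow_le (fun n _ => hp n) hp1 u ωs 2
  calc ‖ω - u - η • ∑ n, p n • gradL n (ωs n)‖ ^ 2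
      ≤ ∑ n, p n * ‖ω - u - η • gradL n (ωs n)‖ ^ 2 := by
        simpa only [Finset.smul_sum, smul_comm η] using
          norm_sub_sum_smul_pow_le (fun n _ => hp n) hp1 (ω - u) (fun n => η • gradL n (ωs n)) 2
    _ ≤ ∑ n, p n * (‖ω - u‖ ^ 2 - μ * η * ‖u - ωs n‖ ^ 2 + 2 * ‖ω - ωs n‖ ^ 2
          + 6 * ℓ * η ^ 2 * (L n u - c n) - κ * (L n ω - L n u)) := by
        gcongr with n
        · exact hp n
        · exact (hsconv n).norm_sub_smul_gradient_sq_le_of_smoothWith (hsmooth n) hℓ hμ hη hℓη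
            (hc n) u ω (ωs n)
    _ = ‖ω - u‖ ^ 2 - μ * η * ∑ n, p n * ‖u - ωs n‖ ^ 2 + 2 * ∑ n, p n * ‖ω - ωs n‖ ^ 2
          + 6 * ℓ * η ^ 2 * (∑ n, p n * L n u - ∑ n, p n * c n)
          - κ * (∑ n, p n * L n ω - ∑ n, p n * L n u) := by
        simp only [mul_add, mul_sub, mul_left_comm (p _), Finset.sum_add_distrib,
          Finset.sum_sub_distrib, ← Finset.mul_sum, ← Finset.sum_mul, hp1, one_mul]
    _ ≤ ‖ω - u‖ ^ 2 - μ * η * ‖ω - u‖ ^ 2 + 2 * ∑ n, p n * ‖ω - ωs n‖ ^ 2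
          + 6 * ℓ * η ^ 2 * (∑ n, p n * L n u - ∑ n, p n * c n) := by
        grw [← hdist]
        exact sub_le_self _ (mul_nonneg hκ (sub_nonneg.2 hu))
    _ = _ := by ring

/-- The one-step descent inequality `B₁` of Lemma 2: under `ℓ`-smoothness and
`μ`-strong convexity of the local losses, for step size `0 < η ≤ 1/(4ℓ)`,
`‖ω − ω* − η ḡ‖² ≤ (1 − μη)‖ω − ω*‖² + 2 ∑ pₙ‖ω − ωₙ‖² + 6ℓη²γ`. -/
theorem one_step_descent_bound
    {H : Type*} [NormedAddCommGroup H] [InnerProductSpace ℝ H]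
    (N : ℕ) (ℓ μ : ℝ) (hℓ : 0 < ℓ) (hμ : 0 < μ)
    (L : Fin N → H → ℝ) (gradL : Fin N → H → H)
    (hdiff : ∀ n w, HasFDerivAt (L n) (innerSL ℝ (gradL n w)) w)
    (hsmooth : ∀ n v w, L n v ≤ L n w + ⟪gradL n w, v - w⟫ + ℓ / 2 * ‖v - w‖ ^ 2)
    (hsconv : ∀ n v w, L n v ≥ L n w + ⟪gradL n w, v - w⟫ + μ / 2 * ‖v - w‖ ^ 2)
    (p : Fin N → ℝ) (hp : ∀ n, 0 ≤ p n) (hp1 : ∑ n, p n = 1)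
    (ωstar : H) (hmin : ∀ w, ∑ n, p n * L n ωstar ≤ ∑ n, p n * L n w)
    (Lstar : Fin N → ℝ) (hLstar : ∀ n, IsGLB (Set.range (L n)) (Lstar n))
    (γ : ℝ) (hγ : γ = (∑ n, p n * L n ωstar) - ∑ n, p n * Lstar n)
    (ωs : Fin N → H) (ω : H) (hω : ω = ∑ n, p n • ωs n)
    (gbar : H) (hg : gbar = ∑ n, p n • gradL n (ωs n))
    (η : ℝ) (hη : 0 < η) (hη' : η ≤ 1 / (4 * ℓ)) :
    ‖ω - ωstar - η • gbar‖ ^ 2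
      ≤ (1 - μ * η) * ‖ω - ωstar‖ ^ 2 + 2 * ∑ n, p n * ‖ω - ωs n‖ ^ 2
        + 6 * ℓ * η ^ 2 * γ := by
  have hℓη : η * (4 * ℓ) ≤ 1 := (le_div_iff₀ (by positivity)).1 hη'
  subst hγ hg
  exact one_step_descent_bound_general hℓ hμ.le hη.le (by linarith) hdiff hsmooth hsconv hp hp1
    (fun n w => (hLstar n).1 ⟨w, rfl⟩) hω (hmin ω)
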